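/- For every natural number s ≥ 1, the 1-dimensional subtorus T := ⟨(8, 4s+3, 4s+11, 4s+19)⟩_ℝ of (ℝ/ℤ)⁴ satisfies D(T) = 1/4 + 1/(16s + 60). -/

import Mathlib

noncomputable section

abbrev Torus (n : ℕ) : Type := Fin n → AddCircle (1 : ℝ)

def torusProj {n : ℕ} (x : Fin n → ℝ) : Torus n := fun i => (x i : AddCircle (1 : ℝ))

def spanTorus {n k : ℕ} (v : Fin k → Fin n → ℤ) : Set (Torus n) :=
  {p | ∃ t : Fin k → ℝ, p = torusProj fun i => ∑ j, t j * (v j i : ℝ)}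

def IsSubtorus {n : ℕ} (k : ℕ) (S : Set (Torus n)) : Prop :=
  ∃ v : Fin k → Fin n → ℤ,
    LinearIndependent ℝ (fun j : Fin k => fun i : Fin n => (v j i : ℝ)) ∧ S = spanTorus v

def IsProperSub {n : ℕ} (S : Set (Torus n)) : Prop :=
  ¬ S ⊆ ⋃ i : Fin n, {x : Torus n | x i = 0}

def DVal {n : ℕ} (S : Set (Torus n)) : ℝ :=
  sInf ((fun x : Torus n => ⨆ i, dist (x i) ((1 / 2 : ℝ) : AddCircle (1 : ℝ))) '' S)

def relSpec1 {n : ℕ} (U : Set (Torus n)) : Set ℝ :=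
  {d | ∃ T : Set (Torus n), IsSubtorus 1 T ∧ IsProperSub T ∧ T ⊆ U ∧ d = DVal T}

def Spec (k n : ℕ) : Set ℝ :=
  {d | ∃ T : Set (Torus n), IsSubtorus k T ∧ IsProperSub T ∧ d = DVal T}

def progSet (d : ℝ) (α β : ℚ) : Set ℝ :=
  {x | ∃ s : ℕ, x = d + 1 / ((α : ℝ) * s + (β : ℝ))}

/-!
The point at parameter `t` on the line spanned by `(8, m - 8, m, m + 8)` has coordinates `x`,
`y - x`, `y`, `y + x`, where `x = 8 t` and `y = m t`. Let `d` and `q` be displacements of `x` and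
`y` from half-integers. If all four coordinates are closer than `1/4 + e` to `1/2` modulo `1`,
then `|d|, |q| < 1/4 + e` and `||d| - |q|| > 1/4 - e`, which confines `(d, q)` to one of four
triangles of size `O(e)` at the points `(0, ±1/4)` and `(±1/4, 0)`. There the relation `m x = 8 y`
turns a linear form of size `O(m e)` into an integer. At `(0, ±1/4)` this integer is odd, hence at
least `1` in absolute value. At `(±1/4, 0)`, for `m ≡ 3` modulo `4`, it is congruent to `1` modulo
`4` up to a common sign, so it is at least `1` or at most `-3`, the wider bound being on the side
where the linear form can be larger. For `m ≥ 6` each case forces `4 e (m + 4) > 1`. The minimum is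
attained at the vertex `(d, q) = (2 e, -(1/4 + e))` with `4 e (m + 4) = 1`.
-/

lemma dist_coe_le_abs_sub_sub_intCast (x y : ℝ) (k : ℤ) :
    dist (x : AddCircle (1 : ℝ)) (y : AddCircle (1 : ℝ)) ≤ |x - y - k| := by
  rw [dist_eq_norm, ← AddCircle.coe_sub, UnitAddCircle.norm_eq]
  exact round_le _ k

lemma exists_dist_coe_eq_abs_sub_sub_intCast (x y : ℝ) :
    ∃ k : ℤ, dist (x : AddCircle (1 : ℝ)) (y : AddCircle (1 : ℝ)) = |x - y - k| :=
  ⟨round (x - y), by rw [dist_eq_norm, ← AddCircle.coe_sub, UnitAddCircle.norm_eq]⟩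

section TorusDistance

variable {n : ℕ}

lemma dist_torusProj_le (x y : Fin n → ℝ) (k : Fin n → ℤ) :
    dist (torusProj x) (torusProj y) ≤ ‖fun i => x i - y i - k i‖ :=
  (dist_pi_le_iff (norm_nonneg _)).2 fun i =>
    (dist_coe_le_abs_sub_sub_intCast (x i) (y i) (k i)).trans
      (norm_le_pi_norm (fun i => x i - y i - k i) i)

lemma exists_norm_le_dist_torusProj (x y : Fin n → ℝ) :
    ∃ k : Fin n → ℤ, ‖fun i => x i - y i - k i‖ ≤ dist (torusProj x) (torusProj y) := by
  choose k hk using fun i => exists_dist_coe_eq_abs_sub_sub_intCast (x i) (y i)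
  refine ⟨k, (pi_norm_le_iff_of_nonneg dist_nonneg).2 fun i => ?_⟩
  rw [Real.norm_eq_abs, ← hk i]
  exact dist_le_pi_dist (torusProj x) (torusProj y) i

lemma iSup_dist_eq_dist (p q : Torus n) : ⨆ i, dist (p i) (q i) = dist p q :=
  le_antisymm (Real.iSup_le (dist_le_pi_dist p q) dist_nonneg)
    ((dist_pi_le_iff (Real.iSup_nonneg fun _ => dist_nonneg)).2
      (le_ciSup (Set.finite_range fun i => dist (p i) (q i)).bddAbove))

lemma DVal_eq_infDist (S : Set (Torus n)) :
    DVal S = Metric.infDist (torusProj fun _ => 1 / 2) S := by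
  have hdist (p : Torus n) :
      ⨆ i, dist (p i) ((1 / 2 : ℝ) : AddCircle (1 : ℝ)) = dist (torusProj fun _ => 1 / 2) p := by
    rw [dist_comm]
    exact iSup_dist_eq_dist p (torusProj fun _ => 1 / 2)
  simp only [DVal, hdist, Metric.infDist_eq_iInf, sInf_image']

lemma mem_spanTorus_singleton {v : Fin n → ℤ} {p : Torus n} :
    p ∈ spanTorus ![v] ↔ ∃ t : ℝ, p = torusProj fun i => t * v i := by
  constructor
  · rintro ⟨t, rfl⟩
    exact ⟨t 0, by simp⟩
  · rintro ⟨t, rfl⟩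
    exact ⟨fun _ => t, by simp⟩

lemma DVal_spanTorus_singleton_le (v : Fin n → ℤ) (t : ℝ) (k : Fin n → ℤ) :
    DVal (spanTorus ![v]) ≤ ‖fun i => t * v i - 1 / 2 - k i‖ := by
  rw [DVal_eq_infDist]
  refine (Metric.infDist_le_dist_of_mem (mem_spanTorus_singleton.2 ⟨t, rfl⟩)).trans ?_
  rw [dist_comm]
  exact dist_torusProj_le _ _ k

lemma le_DVal_spanTorus_singleton {v : Fin n → ℤ} {r : ℝ}
    (h : ∀ (t : ℝ) (k : Fin n → ℤ), r ≤ ‖fun i => t * v i - 1 / 2 - k i‖) :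
    r ≤ DVal (spanTorus ![v]) := by
  rw [DVal_eq_infDist, Metric.le_infDist ⟨_, mem_spanTorus_singleton.2 ⟨0, rfl⟩⟩]
  intro p hp
  obtain ⟨t, rfl⟩ := mem_spanTorus_singleton.1 hp
  obtain ⟨k, hk⟩ := exists_norm_le_dist_torusProj (fun i => t * v i) fun _ => 1 / 2
  rw [dist_comm]
  exact (h t k).trans hk

end TorusDistance

lemma half_le_abs_half_add_intCast (k : ℤ) : (1 / 2 : ℝ) ≤ |1 / 2 + (k : ℝ)| := by
  have hodd : (1 : ℝ) ≤ |((1 + 2 * k : ℤ) : ℝ)| := by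
    exact_mod_cast Int.one_le_abs (by omega : 1 + 2 * k ≠ 0)
  have hdouble : ((1 + 2 * k : ℤ) : ℝ) = 2 * (1 / 2 + k) := by push_cast; ring
  rw [hdouble, abs_mul, abs_two] at hodd
  linarith

lemma half_sub_lt_abs_of_abs_sub_half_lt {w r : ℝ} {k : ℤ} (h : |w - 1 / 2 - k| < r) :
    1 / 2 - r < |w| := by
  have htri : |1 / 2 + (k : ℝ)| ≤ |w| + |w - 1 / 2 - k| := by
    simpa only [sub_sub, sub_sub_cancel] using abs_sub w (w - 1 / 2 - k)
  linarith [half_le_abs_half_add_intCast k]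

lemma lt_abs_abs_sub_abs {α : Type*} [AddCommGroup α] [LinearOrder α] [IsOrderedAddMonoid α]
    {a b r : α} (hadd : r < |a + b|) (hsub : r < |a - b|) : r < |(|a| - |b|)| := by
  rcases abs_cases a with ⟨ha, -⟩ | ⟨ha, -⟩ <;> rcases abs_cases b with ⟨hb, -⟩ | ⟨hb, -⟩ <;>
    rw [ha, hb]
  · exact hsub
  · rwa [sub_neg_eq_add]
  · rwa [← neg_add', abs_neg]
  · rwa [neg_sub_neg, abs_sub_comm]

section Line

variable {m k l : ℤ} {d q e : ℝ}

lemma one_lt_four_mul_of_abs_left_add_lt_abs_right (hm : Odd m)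
    (hline : m * (k + 1 / 2 + d) = 8 * (l + 1 / 2 + q))
    (hq : |q| < 1 / 4 + e) (hdq : |d| + (1 / 4 - e) < |q|) : 1 < 4 * e * (|(m : ℝ)| + 4) := by
  wlog hq0 : 0 ≤ q generalizing k l d q
  · refine this (k := -k - 1) (l := -l - 1) (d := -d) (q := -q) ?_ ?_ ?_ (by linarith)
    · push_cast; linarith
    · rwa [abs_neg]
    · rwa [abs_neg, abs_neg]
  rw [abs_of_nonneg hq0] at hq hdq
  have hN : (1 : ℝ) ≤ |16 * (q - 1 / 4) - 2 * m * d| := by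
    have hne : m * (2 * k + 1) - 16 * l - 12 ≠ 0 := by
      obtain ⟨j, rfl⟩ := hm
      intro h
      ring_nf at h
      omega
    have hcast : ((m * (2 * k + 1) - 16 * l - 12 : ℤ) : ℝ) = 16 * (q - 1 / 4) - 2 * m * d := by
      push_cast; linarith
    rw [← hcast]
    exact_mod_cast Int.one_le_abs hne
  have hq' : |q - 1 / 4| < e := abs_lt.2 ⟨by linarith [abs_nonneg d], by linarith⟩
  have hd' : |d| ≤ 2 * e := by linarith
  calc (1 : ℝ) ≤ |16 * (q - 1 / 4) - 2 * m * d| := hN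
    _ ≤ |16 * (q - 1 / 4)| + |2 * m * d| := abs_sub _ _
    _ = 16 * |q - 1 / 4| + 2 * |(m : ℝ)| * |d| := by simp only [abs_mul, Nat.abs_ofNat]
    _ < 16 * e + 2 * |(m : ℝ)| * (2 * e) :=
      add_lt_add_of_lt_of_le (by gcongr) (by gcongr)
    _ = 4 * e * (|(m : ℝ)| + 4) := by ring

lemma one_lt_four_mul_of_abs_right_add_lt_abs_left (hm : m % 4 = 3) (hm6 : 6 ≤ m)
    (hline : m * (k + 1 / 2 + d) = 8 * (l + 1 / 2 + q))
    (hd : |d| < 1 / 4 + e) (hqd : |q| + (1 / 4 - e) < |d|) : 1 < 4 * e * ((m : ℝ) + 4) := by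
  wlog hd0 : 0 ≤ d generalizing k l d q
  · refine this (k := -k - 1) (l := -l - 1) (d := -d) (q := -q) ?_ ?_ ?_ (by linarith)
    · push_cast; linarith
    · rwa [abs_neg]
    · rwa [abs_neg, abs_neg]
  rw [abs_of_nonneg hd0] at hd hqd
  have hm6' : (6 : ℝ) ≤ m := by exact_mod_cast hm6
  obtain ⟨p, rfl⟩ : ∃ p, d = p + 1 / 4 := ⟨d - 1 / 4, by ring⟩
  obtain ⟨hq_lower, hq_upper⟩ : -(p + e) < q ∧ q < p + e := abs_lt.1 (by linarith)
  have hpe : 0 ≤ e + p := by linarith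
  obtain ⟨N, hN⟩ : ∃ N, N = m * (4 * k + 3) - 32 * l - 16 := ⟨_, rfl⟩
  have hcast : (N : ℝ) = 32 * q - 4 * m * p := by rw [hN]; push_cast; linarith
  have hmod : N % 4 = 1 := by
    obtain ⟨j, rfl⟩ : ∃ j, m = 4 * j + 3 := ⟨m / 4, by omega⟩
    rw [hN]
    ring_nf
    omega
  obtain hpos | hneg : 1 ≤ N ∨ N ≤ -3 := by omega
  · have hslack : 0 ≤ 4 * ((m - 6) * (e + p)) + 8 * (e - p) :=
      add_nonneg (mul_nonneg (by norm_num) (mul_nonneg (by linarith) hpe)) (by linarith)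
    calc (1 : ℝ) ≤ N := by exact_mod_cast hpos
      _ = 32 * q - 4 * m * p := hcast
      _ < 32 * (p + e) - 4 * m * p := by linarith
      _ ≤ 4 * e * (m + 4) := by linarith
  · have hmp : m * p ≤ m * e := mul_le_mul_of_nonneg_left (by linarith) (by linarith)
    have hme : 6 * e ≤ m * e := mul_le_mul_of_nonneg_right hm6' (by linarith)
    have hthree : 3 < 3 * (4 * e * ((m : ℝ) + 4)) :=
      calc (3 : ℝ) ≤ -N := by exact_mod_cast (by omega : 3 ≤ -N)
        _ = -32 * q + 4 * m * p := by rw [hcast]; ring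
        _ < 32 * (p + e) + 4 * m * p := by linarith
        _ ≤ 3 * (4 * e * (m + 4)) := by linarith
    linarith

end Line

lemma le_DVal_spanTorus_of_mod_four_eq_three {m : ℤ} (hm : m % 4 = 3) (hm6 : 6 ≤ m) :
    1 / 4 + 1 / (4 * ((m : ℝ) + 4)) ≤ DVal (spanTorus ![![8, m - 8, m, m + 8]]) := by
  refine le_DVal_spanTorus_singleton fun t k => ?_
  have hm0 : (0 : ℝ) < m := by exact_mod_cast (by omega : 0 < m)
  set e := 1 / (4 * ((m : ℝ) + 4)) with he
  have he1 : 4 * e * ((m : ℝ) + 4) = 1 := by rw [he]; field_simp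
  by_contra! hlt
  have hcoord := (pi_norm_lt_iff (by positivity)).1 hlt
  have h0 : |t * 8 - 1 / 2 - k 0| < 1 / 4 + e := by simpa using hcoord 0
  have h1 : |t * (m - 8) - 1 / 2 - k 1| < 1 / 4 + e := by simpa using hcoord 1
  have h2 : |t * m - 1 / 2 - k 2| < 1 / 4 + e := by simpa using hcoord 2
  have h3 : |t * (m + 8) - 1 / 2 - k 3| < 1 / 4 + e := by simpa using hcoord 3
  set d := t * 8 - 1 / 2 - k 0 with hd
  set q := t * m - 1 / 2 - k 2 with hq
  have hsub : 1 / 2 - (1 / 4 + e) < |q - d| := by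
    refine half_sub_lt_abs_of_abs_sub_half_lt (k := k 1 + k 0 - k 2) ?_
    convert h1 using 2
    rw [hd, hq]
    push_cast
    ring
  have hadd : 1 / 2 - (1 / 4 + e) < |q + d| := by
    refine half_sub_lt_abs_of_abs_sub_half_lt (k := k 3 - k 0 - k 2 - 1) ?_
    convert h3 using 2
    rw [hd, hq]
    push_cast
    ring
  have hline : m * (k 0 + 1 / 2 + d) = 8 * (k 2 + 1 / 2 + q) := by rw [hd, hq]; ring
  obtain hdq | hqd := lt_abs.1 (lt_abs_abs_sub_abs hadd hsub)
  · have hlarge := one_lt_four_mul_of_abs_left_add_lt_abs_right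
      (Int.odd_iff.2 (by omega)) hline h2 (by linarith)
    rw [abs_of_pos hm0] at hlarge
    linarith
  · have hlarge := one_lt_four_mul_of_abs_right_add_lt_abs_left hm hm6 hline h0 (by linarith)
    linarith

lemma DVal_spanTorus_le_of_mul_eq {m k l : ℤ} (hm : -4 < m)
    (h : m * (2 * k + 1) = 16 * l + 3) :
    DVal (spanTorus ![![8, m - 8, m, m + 8]]) ≤ 1 / 4 + 1 / (4 * ((m : ℝ) + 4)) := by
  have hm4 : (1 : ℝ) ≤ m + 4 := by exact_mod_cast (by omega : 1 ≤ m + 4)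
  have hreal : (m : ℝ) * (2 * k + 1) = 16 * l + 3 := by exact_mod_cast h
  set e := 1 / (4 * ((m : ℝ) + 4)) with he
  have he0 : 0 < e := by positivity
  have he1 : 4 * e * ((m : ℝ) + 4) = 1 := by rw [he]; field_simp
  have he4 : e ≤ 1 / 4 := by rw [he]; gcongr; linarith
  set t : ℝ := (2 * k + 1) / 16 + e / 4 with ht
  have h8 : t * 8 = k + 1 / 2 + 2 * e := by rw [ht]; ring
  have hmt : t * m = l + 1 / 4 - e := by rw [ht]; linarith
  have hdisp : (fun i => t * (![8, m - 8, m, m + 8] : Fin 4 → ℤ) i - 1 / 2 -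
      (![k, l - k - 1, l, l + k] : Fin 4 → ℤ) i) =
        ![2 * e, 1 / 4 - 3 * e, -(1 / 4 + e), 1 / 4 + e] := by
    ext i
    fin_cases i <;> simp [mul_add, mul_sub, h8, hmt] <;> ring
  have hle := DVal_spanTorus_singleton_le ![8, m - 8, m, m + 8] t ![k, l - k - 1, l, l + k]
  rw [hdisp] at hle
  refine hle.trans ((pi_norm_le_iff_of_nonneg (by positivity)).2 fun i => abs_le.2 ?_)
  fin_cases i <;> constructor <;> norm_num <;> linarith

lemma DVal_spanTorus_of_mod_four_eq_three {m : ℤ} (hm : m % 4 = 3) (hm6 : 6 ≤ m) :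
    DVal (spanTorus ![![8, m - 8, m, m + 8]]) = 1 / 4 + 1 / (4 * ((m : ℝ) + 4)) := by
  obtain ⟨j, hj⟩ : ∃ j, m = 4 * j + 3 := ⟨m / 4, by omega⟩
  have hmul : m * (2 * (2 * j) + 1) = 16 * (j * (j + 1)) + 3 := by rw [hj]; ring
  exact le_antisymm (DVal_spanTorus_le_of_mul_eq (by omega) hmul)
    (le_DVal_spanTorus_of_mod_four_eq_three hm hm6)

theorem stmt17_general (s : ℤ) (hs : -1 ≤ s) :
    DVal (spanTorus ![![8, 4 * s + 3, 4 * s + 11, 4 * s + 19]]) =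
      1 / 4 + 1 / (16 * (s : ℝ) + 60) := by
  have h := DVal_spanTorus_of_mod_four_eq_three (m := 4 * s + 11) (by omega) (by omega)
  have hfirst : 4 * s + 11 - 8 = 4 * s + 3 := by ring
  have hlast : 4 * s + 11 + 8 = 4 * s + 19 := by ring
  have hden : 4 * (((4 * s + 11 : ℤ) : ℝ) + 4) = 16 * s + 60 := by push_cast; ring
  rwa [hfirst, hlast, hden] at h

/-- The Fan–Sun family: `D(⟨(8, 4s+3, 4s+11, 4s+19)⟩_ℝ) = 1/4 + 1/(16s + 60)`. -/
theorem stmt17 (s : ℕ) (hs : 1 ≤ s) :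
    DVal (spanTorus ![![(8 : ℤ), 4 * (s : ℤ) + 3, 4 * (s : ℤ) + 11, 4 * (s : ℤ) + 19]]) =
      1/4 + 1/(16 * (s : ℝ) + 60) := by
  simpa only [Int.cast_natCast] using stmt17_general s (by omega)
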